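/- arXiv:2210.13789 — 2 statements merged into one kernel-verified Lean document; each statement's English description precedes it below -/
import Mathlib

section
/- In the space C([0,1] × [0,1], ℂ) of continuous complex-valued functions on the unit square with supremum norm, let F(x,y) = x and G(x,y) = y. Then: (i) F ⊥_BJ G, i.e. ‖F + μ G‖_∞ ≥ ‖F‖_∞ = 1 for all μ ∈ ℂ; (ii) in C([0,1], ℂ), the identity function Id(x) = x is NOT Birkhoff-James orthogonal to the constant function 1, since ‖Id − (1/2)·1‖_∞ = 1/2 < 1 = ‖Id‖_∞; (iii) in C([0,1], ℂ), the constant function 1 IS Birkhoff-James orthogonal to Id, i.e. ‖1 + μ·Id‖_∞ ≥ 1 for all μ ∈ ℂ. -/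
open unitInterval

/-!
If `f` attains its norm at a zero of `g`, evaluating there shows `f ⊥_BJ g`: take the point `(1, 0)`
for `x ⊥_BJ y` on the square, and `0` for `1 ⊥_BJ Id`. The only point where `|Id|` attains its norm
is `1`, where the constant `1` does not vanish, and subtracting `1 / 2` centres the range of `Id`.
-/

/-- Birkhoff–James orthogonality `u ⊥_BJ v` over the scalar field `𝕜`. The relation is not
symmetric: `u` is the vector whose norm cannot be decreased by adding multiples of `v`. -/
def IsBirkhoffJamesOrthogonal (𝕜 : Type*) {E : Type*} [NormedField 𝕜] [SeminormedAddCommGroup E]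
    [NormedSpace 𝕜 E] (u v : E) : Prop :=
  ∀ α : 𝕜, ‖u + α • v‖ ≥ ‖u‖

theorem not_isBirkhoffJamesOrthogonal_of_norm_sub_smul_lt {𝕜 E : Type*} [NormedField 𝕜]
    [SeminormedAddCommGroup E] [NormedSpace 𝕜 E] {u v : E} {α : 𝕜} (h : ‖u - α • v‖ < ‖u‖) :
    ¬ IsBirkhoffJamesOrthogonal 𝕜 u v := fun huv ↦ by
  have hle : ‖u‖ ≤ ‖u - α • v‖ := by simpa only [neg_smul, ← sub_eq_add_neg] using huv (-α)
  exact hle.not_gt h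

section ContinuousMap

variable {X E : Type*} [TopologicalSpace X] [CompactSpace X] [SeminormedAddCommGroup E]
  {f : C(X, E)} {a : X}

theorem norm_eq_of_forall_norm_apply_le {C : ℝ} (hle : ∀ x, ‖f x‖ ≤ C) (ha : ‖f a‖ = C) :
    ‖f‖ = C :=
  le_antisymm ((f.norm_le (ha ▸ norm_nonneg _)).2 hle) (ha ▸ f.norm_coe_le_norm a)

theorem isBirkhoffJamesOrthogonal_of_norm_apply_eq_of_apply_eq_zero (𝕜 : Type*) [NormedField 𝕜]
    [NormedSpace 𝕜 E] {g : C(X, E)} (hf : ‖f a‖ = ‖f‖) (hg : g a = 0) :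
    IsBirkhoffJamesOrthogonal 𝕜 f g := fun α ↦
  calc
    ‖f + α • g‖ ≥ ‖(f + α • g) a‖ := (f + α • g).norm_coe_le_norm a
    _ = ‖f a‖ := by simp [hg]
    _ = ‖f‖ := hf

end ContinuousMap

theorem norm_ofReal_unitInterval_le_one (x : I) : ‖((x : ℝ) : ℂ)‖ ≤ 1 :=
  (Complex.norm_of_nonneg x.2.1).trans_le x.2.2

theorem norm_ofReal_unitInterval_sub_half_le (x : I) : ‖((x : ℝ) : ℂ) - 1 / 2‖ ≤ 1 / 2 := by
  have habs : |(x : ℝ) - 1 / 2| ≤ 1 / 2 := abs_le.2 ⟨by linarith [x.2.1], by linarith [x.2.2]⟩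
  rw [← Real.norm_eq_abs, ← Complex.norm_real] at habs
  simpa using habs

/-- In `C([0,1] × [0,1], ℂ)` with the supremum norm, `F(x,y) = x` is
Birkhoff-James orthogonal to `G(x,y) = y` (and `‖F‖ = 1`); in `C([0,1], ℂ)` the identity
function is not Birkhoff-James orthogonal to the constant function `1`
(indeed `‖Id − (1/2)·1‖ = 1/2 < 1 = ‖Id‖`), while `1` is Birkhoff-James orthogonal
to the identity function. -/
theorem stmt3
    (F G : C(I × I, ℂ))
    (hF : ∀ p : I × I, F p = ((p.1 : ℝ) : ℂ))
    (hG : ∀ p : I × I, G p = ((p.2 : ℝ) : ℂ))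
    (Id : C(I, ℂ)) (hId : ∀ x : I, Id x = ((x : ℝ) : ℂ)) :
    (‖F‖ = 1 ∧ ∀ μ : ℂ, ‖F + μ • G‖ ≥ ‖F‖) ∧
    (‖Id - ((1 : ℂ) / 2) • (1 : C(I, ℂ))‖ = 1 / 2 ∧ ‖Id‖ = 1 ∧
      ¬ (∀ μ : ℂ, ‖Id + μ • (1 : C(I, ℂ))‖ ≥ ‖Id‖)) ∧
    (∀ μ : ℂ, ‖(1 : C(I, ℂ)) + μ • Id‖ ≥ ‖(1 : C(I, ℂ))‖) := by
  have hF_one : ‖F (1, 0)‖ = 1 := by simp [hF]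
  have hF_norm : ‖F‖ = 1 := norm_eq_of_forall_norm_apply_le
    (fun p ↦ hF p ▸ norm_ofReal_unitInterval_le_one p.1) hF_one
  have hId_norm : ‖Id‖ = 1 := norm_eq_of_forall_norm_apply_le (a := 1)
    (fun x ↦ hId x ▸ norm_ofReal_unitInterval_le_one x) (by simp [hId])
  have hsub (x : I) : (Id - (1 / 2 : ℂ) • (1 : C(I, ℂ))) x = ((x : ℝ) : ℂ) - 1 / 2 := by
    simp [hId]
  have hsub_norm : ‖Id - (1 / 2 : ℂ) • (1 : C(I, ℂ))‖ = 1 / 2 :=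
    norm_eq_of_forall_norm_apply_le (a := 1)
      (fun x ↦ hsub x ▸ norm_ofReal_unitInterval_sub_half_le x) (by rw [hsub]; norm_num)
  refine ⟨⟨hF_norm, ?_⟩, ⟨hsub_norm, hId_norm, ?_⟩, ?_⟩
  · exact isBirkhoffJamesOrthogonal_of_norm_apply_eq_of_apply_eq_zero ℂ
      (hF_one.trans hF_norm.symm) (by simp [hG])
  · exact not_isBirkhoffJamesOrthogonal_of_norm_sub_smul_lt (α := (1 / 2 : ℂ))
      (by rw [hsub_norm, hId_norm]; norm_num)
  · exact isBirkhoffJamesOrthogonal_of_norm_apply_eq_of_apply_eq_zero ℂ (a := 0)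
      (by simp) (by simp [hId])
end

section
/- Let K₁ and K₂ be compact Hausdorff topological spaces and let f₁, f₂ ∈ C(K₁, ℝ) and g₁, g₂ ∈ C(K₂, ℝ) be continuous real-valued functions (with supremum norm). Then the function F₁ : K₁ × K₂ → ℝ, F₁(s,t) = f₁(s)·g₁(t), is Birkhoff-James orthogonal in C(K₁ × K₂, ℝ) to F₂(s,t) = f₂(s)·g₂(t) if and only if f₁ ⊥_BJ f₂ in C(K₁, ℝ) or g₁ ⊥_BJ g₂ in C(K₂, ℝ). -/
/-!
In `C(K, ℝ)`, `f ⊥_BJ h` holds exactly when the values of `f * h` on the set where `|f|` attains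
`‖f‖` do not all have the same strict sign. When `f₁` and `g₁` are nonzero, the corresponding set
for `(s, t) ↦ f₁ s * g₁ t` is the product of those for `f₁` and `g₁`, so the values to inspect are
the products `a * b` of the values `a` of `f₁ * f₂` and `b` of `g₁ * g₂`. These products all have
the same strict sign if and only if both the `a`s and the `b`s do.
-/

open Filter Set Topology
open scoped Pointwise RealInnerProductSpace

section BirkhoffJamesOrthogonal

variable {Z : Type*} [SeminormedAddCommGroup Z] [NormedSpace ℝ Z]

/-- Birkhoff-James orthogonality `u ⊥_BJ v` in a real normed space. -/
def BirkhoffJamesOrthogonal (u v : Z) : Prop :=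
  ∀ α : ℝ, ‖u + α • v‖ ≥ ‖u‖

theorem birkhoffJamesOrthogonal_of_norm_eq_zero {u : Z} (hu : ‖u‖ = 0) (v : Z) :
    BirkhoffJamesOrthogonal u v :=
  fun _ => hu.trans_le (norm_nonneg _)

theorem birkhoffJamesOrthogonal_iff_forall_nonneg {u v : Z} :
    BirkhoffJamesOrthogonal u v ↔
      (∀ α : ℝ, 0 ≤ α → ‖u‖ ≤ ‖u + α • v‖) ∧ ∀ α : ℝ, 0 ≤ α → ‖u‖ ≤ ‖u + α • -v‖ := by
  refine ⟨fun h => ⟨fun α _ => h α, fun α _ => by simpa using h (-α)⟩, ?_⟩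
  rintro ⟨hpos, hneg⟩ α
  rcases le_total 0 α with hα | hα
  · exact hpos α hα
  · simpa using hneg (-α) (neg_nonneg.2 hα)

end BirkhoffJamesOrthogonal

theorem norm_le_norm_add_smul_iff {E : Type*} [SeminormedAddCommGroup E] [InnerProductSpace ℝ E]
    {α : ℝ} (hα : 0 < α) (u v : E) :
    ‖u‖ ≤ ‖u + α • v‖ ↔ 0 ≤ 2 * ⟪u, v⟫ + α * ‖v‖ ^ 2 := by
  have expand : ‖u + α • v‖ ^ 2 = ‖u‖ ^ 2 + α * (2 * ⟪u, v⟫ + α * ‖v‖ ^ 2) := by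
    rw [norm_add_sq_real, real_inner_smul_right, norm_smul, Real.norm_of_nonneg hα.le]
    ring
  rw [← sq_le_sq₀ (norm_nonneg _) (norm_nonneg _), expand, le_add_iff_nonneg_right,
    mul_nonneg_iff_of_pos_left hα]

section NormingSet

variable {K E : Type*} [TopologicalSpace K] [CompactSpace K] [SeminormedAddCommGroup E]

/-- The points at which a continuous function on a compact space attains its supremum norm. -/
def normingSet (f : C(K, E)) : Set K :=
  {s | ‖f s‖ = ‖f‖}

theorem mem_normingSet_iff_norm_le {f : C(K, E)} {s : K} :
    s ∈ normingSet f ↔ ‖f‖ ≤ ‖f s‖ :=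
  (f.norm_coe_le_norm s).ge_iff_eq.symm

theorem normingSet_nonempty [Nonempty K] (f : C(K, E)) :
    (normingSet f).Nonempty := by
  obtain ⟨s, -, hs⟩ := isCompact_univ.exists_isMaxOn univ_nonempty
    (map_continuous f).norm.continuousOn
  exact ⟨s, mem_normingSet_iff_norm_le.2 <| f.norm_le_of_nonempty.2 fun x => hs (mem_univ x)⟩

variable [InnerProductSpace ℝ E] [Nonempty K]

theorem exists_mem_normingSet_inner_nonneg {f h : C(K, E)}
    (hfh : ∀ α : ℝ, 0 ≤ α → ‖f‖ ≤ ‖f + α • h‖) : ∃ s ∈ normingSet f, 0 ≤ ⟪f s, h s⟫ := by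
  -- `s` is a limit of norming points `x α` of `f + α • h` as `α → 0⁺`.
  choose x hx using fun α : ℝ => normingSet_nonempty (f + α • h)
  have norm_le (α : ℝ) (hα : 0 < α) : ‖f‖ ≤ ‖f (x α) + α • h (x α)‖ :=
    (hfh α hα.le).trans_eq (hx α).symm
  let U : Ultrafilter ℝ := .of (𝓝[>] 0)
  have eventually_pos : ∀ᶠ α in (U : Filter ℝ), 0 < α := Ultrafilter.of_le _ self_mem_nhdsWithin
  have hα : Tendsto id (U : Filter ℝ) (𝓝 0) := (Ultrafilter.of_le _).trans nhdsWithin_le_nhds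
  obtain ⟨s, hs⟩ : ∃ s, Tendsto x U (𝓝 s) := ⟨_, (U.map x).le_nhds_lim⟩
  have hf : Tendsto (fun α => f (x α)) U (𝓝 (f s)) := ((map_continuous f).tendsto s).comp hs
  have hh : Tendsto (fun α => h (x α)) U (𝓝 (h s)) := ((map_continuous h).tendsto s).comp hs
  refine ⟨s, mem_normingSet_iff_norm_le.2 ?_, ?_⟩
  · have tendsto_norm : Tendsto (fun α => ‖f (x α) + α • h (x α)‖) U (𝓝 ‖f s‖) := by
      simpa using (hf.add (hα.smul hh)).norm
    exact ge_of_tendsto tendsto_norm (eventually_pos.mono norm_le)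
  · have tendsto_inner : Tendsto (fun α => 2 * ⟪f (x α), h (x α)⟫ + α * ‖h (x α)‖ ^ 2) U
        (𝓝 (2 * ⟪f s, h s⟫)) := by
      simpa using ((hf.inner hh).const_mul 2).add (hα.mul (hh.norm.pow 2))
    have two_mul_inner_nonneg : 0 ≤ 2 * ⟪f s, h s⟫ :=
      ge_of_tendsto tendsto_inner <| eventually_pos.mono fun α hα_pos =>
        (norm_le_norm_add_smul_iff hα_pos _ _).1 <|
          (f.norm_coe_le_norm _).trans (norm_le α hα_pos)
    linarith

theorem forall_nonneg_norm_le_norm_add_smul_iff (f h : C(K, E)) :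
    (∀ α : ℝ, 0 ≤ α → ‖f‖ ≤ ‖f + α • h‖) ↔ ∃ s ∈ normingSet f, 0 ≤ ⟪f s, h s⟫ := by
  refine ⟨exists_mem_normingSet_inner_nonneg, ?_⟩
  rintro ⟨s, hs, hinner⟩ α hα
  rcases hα.eq_or_lt with rfl | hα_pos
  · simp
  calc ‖f‖ = ‖f s‖ := hs.symm
    _ ≤ ‖f s + α • h s‖ := (norm_le_norm_add_smul_iff hα_pos _ _).2 (by positivity)
    _ ≤ ‖f + α • h‖ := (f + α • h).norm_coe_le_norm s

end NormingSet

section StraddlesZero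

/-- A set with a nonnegative and a nonpositive element. For sets of reals this says that `0` lies
in the convex hull. -/
def StraddlesZero {R : Type*} [Zero R] [LE R] (A : Set R) : Prop :=
  (∃ a ∈ A, 0 ≤ a) ∧ ∃ a ∈ A, a ≤ 0

theorem not_straddlesZero_iff {R : Type*} [Zero R] [LinearOrder R] {A : Set R} :
    ¬StraddlesZero A ↔ (∀ a ∈ A, a < 0) ∨ ∀ a ∈ A, 0 < a := by
  rw [StraddlesZero, not_and_or]
  simp only [not_exists, not_and, not_le]

variable {R : Type*} [CommRing R] [LinearOrder R] [IsStrictOrderedRing R] {A B : Set R}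

theorem StraddlesZero.mul_right (hA : StraddlesZero A) (hB : B.Nonempty) :
    StraddlesZero (A * B) := by
  obtain ⟨⟨a, ha, ha_nonneg⟩, a', ha', ha'_nonpos⟩ := hA
  obtain ⟨b, hb⟩ := hB
  rcases le_total 0 b with hb₀ | hb₀
  · exact ⟨⟨a * b, mul_mem_mul ha hb, mul_nonneg ha_nonneg hb₀⟩,
      a' * b, mul_mem_mul ha' hb, mul_nonpos_of_nonpos_of_nonneg ha'_nonpos hb₀⟩
  · exact ⟨⟨a' * b, mul_mem_mul ha' hb, mul_nonneg_of_nonpos_of_nonpos ha'_nonpos hb₀⟩,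
      a * b, mul_mem_mul ha hb, mul_nonpos_of_nonneg_of_nonpos ha_nonneg hb₀⟩

theorem straddlesZero_mul_iff (hA : A.Nonempty) (hB : B.Nonempty) :
    StraddlesZero (A * B) ↔ StraddlesZero A ∨ StraddlesZero B := by
  constructor
  · contrapose!
    simp only [not_straddlesZero_iff, ← image2_mul, forall_mem_image2]
    rintro ⟨hA | hA, hB | hB⟩
    · exact .inr fun a ha b hb => mul_pos_of_neg_of_neg (hA a ha) (hB b hb)
    · exact .inl fun a ha b hb => mul_neg_of_neg_of_pos (hA a ha) (hB b hb)
    · exact .inl fun a ha b hb => mul_neg_of_pos_of_neg (hA a ha) (hB b hb)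
    · exact .inr fun a ha b hb => mul_pos (hA a ha) (hB b hb)
  · rintro (h | h)
    · exact h.mul_right hB
    · exact mul_comm B A ▸ h.mul_right hA

end StraddlesZero

theorem birkhoffJamesOrthogonal_iff_straddlesZero {K E : Type*} [TopologicalSpace K]
    [CompactSpace K] [Nonempty K] [SeminormedAddCommGroup E] [InnerProductSpace ℝ E]
    (f h : C(K, E)) :
    BirkhoffJamesOrthogonal f h ↔ StraddlesZero ((fun s => ⟪f s, h s⟫) '' normingSet f) := by
  simp only [birkhoffJamesOrthogonal_iff_forall_nonneg, forall_nonneg_norm_le_norm_add_smul_iff,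
    StraddlesZero, exists_mem_image, ContinuousMap.neg_apply, inner_neg_right, neg_nonneg]

section ElementaryTensor

variable {K₁ K₂ : Type*} [TopologicalSpace K₁] [TopologicalSpace K₂]

/-- The function `(s, t) ↦ f s * g t`, which represents the elementary tensor `f ⊗ g` under the
identification `C(K₁) ⊗^λ C(K₂) ≅ C(K₁ × K₂)`. -/
def elementaryTensor {R : Type*} [TopologicalSpace R] [Mul R] [ContinuousMul R]
    (f : C(K₁, R)) (g : C(K₂, R)) : C(K₁ × K₂, R) :=
  f.comp ContinuousMap.fst * g.comp ContinuousMap.snd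

theorem elementaryTensor_apply {R : Type*} [TopologicalSpace R] [Mul R] [ContinuousMul R]
    (f : C(K₁, R)) (g : C(K₂, R)) (p : K₁ × K₂) : elementaryTensor f g p = f p.1 * g p.2 :=
  rfl

variable [CompactSpace K₁] [CompactSpace K₂]

theorem norm_elementaryTensor {R : Type*} [NonUnitalSeminormedRing R] [NormMulClass R]
    (f : C(K₁, R)) (g : C(K₂, R)) : ‖elementaryTensor f g‖ = ‖f‖ * ‖g‖ := by
  apply le_antisymm
  · refine (ContinuousMap.norm_le _ (by positivity)).2 fun p => ?_
    rw [elementaryTensor_apply, norm_mul]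
    gcongr <;> exact ContinuousMap.norm_coe_le_norm _ _
  · rcases isEmpty_or_nonempty K₁ with _ | _
    · simp [norm_of_subsingleton f]
    rcases isEmpty_or_nonempty K₂ with _ | _
    · simp [norm_of_subsingleton g]
    obtain ⟨s, hs⟩ := normingSet_nonempty f
    obtain ⟨t, ht⟩ := normingSet_nonempty g
    calc ‖f‖ * ‖g‖ = ‖f s‖ * ‖g t‖ := by rw [hs, ht]
      _ = ‖elementaryTensor f g (s, t)‖ := (norm_mul _ _).symm
      _ ≤ ‖elementaryTensor f g‖ := ContinuousMap.norm_coe_le_norm _ _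

theorem normingSet_elementaryTensor {R : Type*} [NonUnitalNormedRing R] [NormMulClass R]
    {f : C(K₁, R)} {g : C(K₂, R)} (hf : f ≠ 0) (hg : g ≠ 0) :
    normingSet (elementaryTensor f g) = normingSet f ×ˢ normingSet g := by
  ext ⟨s, t⟩
  have hfg : 0 < ‖f‖ * ‖g‖ := mul_pos (norm_pos_iff.2 hf) (norm_pos_iff.2 hg)
  simp only [normingSet, mem_ofPred_eq, mem_prod, elementaryTensor_apply, norm_mul,
    norm_elementaryTensor]
  refine ⟨fun h => ?_, fun ⟨hs, ht⟩ => by rw [hs, ht]⟩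
  have hs_pos : 0 < ‖f s‖ := pos_of_mul_pos_left (h ▸ hfg) (norm_nonneg _)
  exact (mul_eq_mul_iff_eq_and_eq_of_pos (f.norm_coe_le_norm s) (g.norm_coe_le_norm t) hs_pos
    (norm_pos_iff.2 hg)).1 h

theorem image_inner_normingSet_elementaryTensor {f₁ : C(K₁, ℝ)} {g₁ : C(K₂, ℝ)} (hf₁ : f₁ ≠ 0)
    (hg₁ : g₁ ≠ 0) (f₂ : C(K₁, ℝ)) (g₂ : C(K₂, ℝ)) :
    (fun p => ⟪elementaryTensor f₁ g₁ p, elementaryTensor f₂ g₂ p⟫) ''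
        normingSet (elementaryTensor f₁ g₁) =
      ((fun s => ⟪f₁ s, f₂ s⟫) '' normingSet f₁) * ((fun t => ⟪g₁ t, g₂ t⟫) '' normingSet g₁) := by
  have inner_mul (a b c d : ℝ) : ⟪a * b, c * d⟫ = ⟪a, c⟫ * ⟪b, d⟫ := by
    simp only [RCLike.inner_apply, conj_trivial]
    ring
  simp only [normingSet_elementaryTensor hf₁ hg₁, elementaryTensor_apply, inner_mul]
  rw [← image2_mul, image2_image_left, image2_image_right, ← image_prod]

end ElementaryTensor

theorem stmt7_general {K₁ K₂ : Type*} [TopologicalSpace K₁] [CompactSpace K₁]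
    [TopologicalSpace K₂] [CompactSpace K₂] (f₁ f₂ : C(K₁, ℝ)) (g₁ g₂ : C(K₂, ℝ)) :
    BirkhoffJamesOrthogonal (elementaryTensor f₁ g₁) (elementaryTensor f₂ g₂) ↔
      BirkhoffJamesOrthogonal f₁ f₂ ∨ BirkhoffJamesOrthogonal g₁ g₂ := by
  by_cases hf₁ : f₁ = 0
  · simp [birkhoffJamesOrthogonal_of_norm_eq_zero, norm_elementaryTensor, hf₁]
  by_cases hg₁ : g₁ = 0
  · simp [birkhoffJamesOrthogonal_of_norm_eq_zero, norm_elementaryTensor, hg₁]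
  obtain ⟨s, -⟩ := DFunLike.ne_iff.1 hf₁
  obtain ⟨t, -⟩ := DFunLike.ne_iff.1 hg₁
  have : Nonempty K₁ := ⟨s⟩
  have : Nonempty K₂ := ⟨t⟩
  simp only [birkhoffJamesOrthogonal_iff_straddlesZero,
    image_inner_normingSet_elementaryTensor hf₁ hg₁]
  exact straddlesZero_mul_iff ((normingSet_nonempty f₁).image _) ((normingSet_nonempty g₁).image _)

/-- For compact Hausdorff spaces `K₁, K₂` and real-valued continuous
functions `f₁, f₂` on `K₁` and `g₁, g₂` on `K₂`, the function `(s,t) ↦ f₁ s * g₁ t` is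
Birkhoff-James orthogonal to `(s,t) ↦ f₂ s * g₂ t` in `C(K₁ × K₂, ℝ)` if and only if
`f₁ ⊥_BJ f₂` in `C(K₁, ℝ)` or `g₁ ⊥_BJ g₂` in `C(K₂, ℝ)`. -/
theorem stmt7
    {K₁ K₂ : Type*} [TopologicalSpace K₁] [CompactSpace K₁] [T2Space K₁]
    [TopologicalSpace K₂] [CompactSpace K₂] [T2Space K₂]
    (f₁ f₂ : C(K₁, ℝ)) (g₁ g₂ : C(K₂, ℝ)) :
    (∀ α : ℝ,
        ‖(f₁.comp ContinuousMap.fst * g₁.comp ContinuousMap.snd) +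
            α • (f₂.comp ContinuousMap.fst * g₂.comp ContinuousMap.snd)‖ ≥
          ‖f₁.comp ContinuousMap.fst * g₁.comp ContinuousMap.snd‖) ↔
      (∀ α : ℝ, ‖f₁ + α • f₂‖ ≥ ‖f₁‖) ∨ (∀ α : ℝ, ‖g₁ + α • g₂‖ ≥ ‖g₁‖) :=
  stmt7_general f₁ f₂ g₁ g₂
end
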